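/- Let a < b be positive integers with r = b mod a > 0, and suppose r divides a. Let R̄ be the complement of the identity permutation [0,1,…,r−1] of [r], i.e., R̄(i) = r−1−i. Then the extension sequence of (R̄, a) is a permutation of [a] that is nice corresponding to b. -/

import Mathlib

/-- `A` is a permutation of `[a] = {0, 1, …, a-1}`, viewed as a function `ℕ → ℕ`
restricted to `{i | i < a}`. -/
def IsPermOf (a : ℕ) (A : ℕ → ℕ) : Prop :=
  Set.BijOn A {i | i < a} {i | i < a}

/-- The complement of a permutation `A` of `[a]`: `Ā(i) = a - 1 - A(i)`. -/
def permCompl (a : ℕ) (A : ℕ → ℕ) : ℕ → ℕ := fun i => a - 1 - A i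

/-- A permutation `A` of `[a]` is *nice* corresponding to `b > a` with `a ∤ b`,
where `r = b % a` and `d = gcd(a, b)`, if `A(i) < A(i + r)` for all
`0 ≤ i ≤ a - r - 1` and `A(j) < A(j - a + r)` for all `a - r ≤ j ≤ a - d - 1`. -/
def Nice (a b : ℕ) (A : ℕ → ℕ) : Prop :=
  (∀ i, i + b % a < a → A i < A (i + b % a)) ∧
  (∀ j, a - b % a ≤ j → j + Nat.gcd a b < a → A j < A (j + b % a - a))

/-- `B` is the extension sequence of the pair `(A, b)`, where `A` is a permutation
of `[a]`: `B` is the permutation of `[b]` with `B(i) < B(j)` iff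
`A(i mod a) < A(j mod a)`, or `A(i mod a) = A(j mod a)` and `i < j`. -/
def IsExtSeq (a b : ℕ) (A B : ℕ → ℕ) : Prop :=
  IsPermOf b B ∧
  ∀ i < b, ∀ j < b,
    (B i < B j ↔ A (i % a) < A (j % a) ∨ (A (i % a) = A (j % a) ∧ i < j))

theorem extSeq_of_compl_id_is_nice (a b : ℕ) (ha : 0 < a) (hab : a < b)
    (hr : 0 < b % a) (hdvd : (b % a) ∣ a)
    (B : ℕ → ℕ) (hB : IsExtSeq (b % a) a (fun i => b % a - 1 - i) B) :
    IsPermOf a B ∧ Nice a b B := by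
  refine ⟨hB.1, ?_, ?_⟩
  · intro i hi
    rw [hB.2 i (by omega) _ hi]
    right
    simp [hr]
  · intro j h1 h2
    have hg : Nat.gcd a b = b % a := by
      rw [Nat.gcd_rec]
      exact Nat.gcd_eq_left hdvd
    omega
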